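/- Let F be a field of characteristic p (possibly 0), let f ∈ F[t][x] be a square-free polynomial, and let c ∈ F[t]. Let Ψ : F[t][x] → F[t][x] be the unique F[t]-algebra automorphism with Ψ(x) = x + c, so Ψ(f)(t,x) = f(t, x + c(t)). If p = 0 or p > deg_x(f)·deg(c) + deg_t(f), then Ψ(f) is separable in t. -/

import Mathlib

/-- `g ∈ F[t][x]` (outer variable `x`, inner variable `t`) is separable in `t`: viewed as a
univariate polynomial in `t` with coefficients in the rational function field `F(x)`, it is
separable. -/
noncomputable def sepT {F : Type*} [Field F] (g : Polynomial (Polynomial F)) : Prop :=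
  Polynomial.Separable
    (Polynomial.eval₂ (Polynomial.mapRingHom (algebraMap F (RatFunc F)))
      (Polynomial.C RatFunc.X) g)

/-- The degree in `t` of `f ∈ F[t][x]` (outer variable `x`, inner variable `t`). -/
noncomputable def degTP {F : Type*} [CommRing F] (f : Polynomial (Polynomial F)) : ℕ :=
  f.support.sup fun i => (f.coeff i).natDegree

open Polynomial in
theorem aux_squarefree_map {R K : Type*} [CommRing R] [IsDomain R] [IsGCDMonoid R] [Field K]
    [Algebra R K] [IsFractionRing R K] {h : R[X]} (hh : Squarefree h) :
    Squarefree (h.map (algebraMap R K)) := by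
  let : NormalizedGCDMonoid R := Nonempty.some inferInstance
  intro q hq
  have hinj := IsFractionRing.injective R K
  have hq0 : q ≠ 0 := by
    rintro rfl
    rw [mul_zero, zero_dvd_iff, Polynomial.map_eq_zero_iff hinj] at hq
    exact hh.ne_zero hq
  apply isUnit_or_eq_zero_of_isUnit_integerNormalization_primPart (R := R) hq0
  apply hh
  obtain ⟨b, hb, hbq⟩ := IsLocalization.integerNormalization_spec (nonZeroDivisors R) q
  set N := IsLocalization.integerNormalization (nonZeroDivisors R) q with hN
  have hb' : (algebraMap R K b) ≠ 0 := by
    rw [Ne, map_eq_zero_iff _ hinj]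
    exact nonZeroDivisors.ne_zero hb
  have hdvd : N.primPart.map (algebraMap R K) ∣ q := by
    have h1 : N.primPart.map (algebraMap R K) ∣ N.map (algebraMap R K) :=
      Polynomial.map_dvd _ N.primPart_dvd
    rw [hbq, Algebra.smul_def, Polynomial.algebraMap_apply] at h1
    exact ((Polynomial.isUnit_C.mpr hb'.isUnit).dvd_mul_left).mp h1
  apply (N.isPrimitive_primPart.mul N.isPrimitive_primPart).dvd_of_fraction_map_dvd_fraction_map
    (K := K)
  rw [Polynomial.map_mul]
  exact (mul_dvd_mul hdvd hdvd).trans hq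

open Polynomial in
theorem aux_separable {K : Type*} [Field K] {G : K[X]} (hG : Squarefree G)
    (hp : ringChar K = 0 ∨ G.natDegree < ringChar K) : G.Separable := by
  rw [Polynomial.separable_def]
  apply isCoprime_of_irreducible_dvd (fun h => hG.ne_zero h.1)
  rintro q hq ⟨r, hr⟩ hqG'
  have hG0 := hG.ne_zero
  rw [hr, derivative_mul] at hqG'
  have h1 : q ∣ derivative q * r := (dvd_add_left (dvd_mul_right _ _)).mp hqG'
  rcases hq.prime.dvd_or_dvd h1 with h2 | h2
  · have hpos := hq.natDegree_pos
    have h3 : derivative q = 0 := by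
      by_contra h0
      have := natDegree_le_of_dvd h2 h0
      have := natDegree_derivative_lt hpos.ne'
      omega
    have h4 : ((q.natDegree : ℕ) : K) = 0 := by
      have h5 := congrArg (fun P => coeff P (q.natDegree - 1)) h3
      simp only [coeff_derivative, coeff_zero] at h5
      rw [Nat.sub_add_cancel hpos] at h5
      rcases mul_eq_zero.mp h5 with h6 | h6
      · exact absurd (leadingCoeff_eq_zero.mp h6) hq.ne_zero
      · rw [← h6]
        conv_lhs => rw [← Nat.sub_add_cancel hpos]
        push_cast
        rfl
    have h7 := (ringChar.spec K _).mp h4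
    have h8 : q.natDegree ≤ G.natDegree := natDegree_le_of_dvd ⟨r, hr⟩ hG0
    rcases hp with hp | hp
    · rw [hp, zero_dvd_iff] at h7
      omega
    · have := Nat.le_of_dvd hpos h7
      omega
  · exact hq.not_isUnit (hG q (hr ▸ mul_dvd_mul_left q h2))

theorem aux_squarefree_equiv {A B : Type*} [CommRing A] [CommRing B] (e : A ≃+* B) {a : A}
    (ha : Squarefree a) : Squarefree (e a) := by
  intro y hy
  have h := map_dvd e.symm hy
  rw [map_mul, e.symm_apply_apply] at h
  have := (ha _ h).map e
  rwa [e.apply_symm_apply] at this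

/-- Let `F` be a field of characteristic `p` (possibly `0`),
`f ∈ F[t][x]` square-free, and `c ∈ F[t]`. If `p = 0` or
`p > deg_x f · deg c + deg_t f`, then `f(t, x + c(t))` is separable in `t`. -/
theorem comp_shift_sepT (F : Type*) [Field F]
    (f : Polynomial (Polynomial F)) (hf : Squarefree f) (c : Polynomial F)
    (hp : ringChar F = 0 ∨ f.natDegree * c.natDegree + degTP f < ringChar F) :
    sepT (f.comp (Polynomial.X + Polynomial.C c)) := by
  unfold sepT
  have hchar : ringChar (RatFunc F) = ringChar F :=
    (Algebra.ringChar_eq F (RatFunc F)).symm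
  apply aux_separable
  · have hswap : ∀ g : Polynomial (Polynomial F),
        Polynomial.eval₂ (Polynomial.mapRingHom (algebraMap F (RatFunc F)))
          (Polynomial.C RatFunc.X) g =
        (Polynomial.Bivariate.swap g).map (algebraMap (Polynomial F) (RatFunc F)) := by
      intro g
      have : Polynomial.eval₂RingHom (Polynomial.mapRingHom (algebraMap F (RatFunc F)))
          (Polynomial.C RatFunc.X) =
          (Polynomial.mapRingHom (algebraMap (Polynomial F) (RatFunc F))).comp
            (Polynomial.Bivariate.swap (R := F) : _ ≃+* _).toRingHom := by
        ext : 2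
        · ext a : 1
          simp [Polynomial.Bivariate.swap_apply]
        · simp [Polynomial.Bivariate.swap_apply]
        · simp [Polynomial.Bivariate.swap_apply]
      exact congrArg (fun φ => φ g) this
    rw [hswap]
    apply aux_squarefree_map
    refine aux_squarefree_equiv (Polynomial.Bivariate.swap (R := F)).toRingEquiv ?_
    have := aux_squarefree_equiv (Polynomial.algEquivAevalXAddC c).toRingEquiv hf
    simpa [Polynomial.comp, Polynomial.aeval_def] using this
  · rw [hchar]
    refine hp.imp id (lt_of_le_of_lt ?_)
    rw [Polynomial.eval₂_comp, Polynomial.eval₂_eq_sum, Polynomial.sum_def]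
    apply Polynomial.natDegree_sum_le_of_forall_le
    intro i hi
    have h1 : (f.coeff i).natDegree ≤ degTP f :=
      Finset.le_sup (f := fun i => (f.coeff i).natDegree) hi
    have h2 : i ≤ f.natDegree := Polynomial.le_natDegree_of_mem_supp i hi
    refine Polynomial.natDegree_mul_le.trans ?_
    rw [add_comm]
    refine add_le_add ?_ ?_
    · refine Polynomial.natDegree_pow_le.trans (Nat.mul_le_mul h2 ?_)
      simp only [Polynomial.eval₂_add, Polynomial.eval₂_X, Polynomial.eval₂_C]
      refine (Polynomial.natDegree_add_le _ _).trans ?_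
      simp [Polynomial.natDegree_map_le]
    · exact Polynomial.natDegree_map_le.trans h1
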